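/- arXiv:1707.00818 — 12 statements merged into one kernel-verified Lean document; each statement's English description precedes it below -/
import Mathlib

section
/- Let τ and τ' be points of the upper half-plane ℍ ⊂ ℂ, and let w : ℂ → ℂ be the unique ℝ-linear map satisfying w(1/√(Im τ)) = 1/√(Im τ') and w(τ/√(Im τ)) = τ'/√(Im τ'). Then log ‖w‖ = (1/2) · dist(τ, τ'), where ‖w‖ is the operator norm of w with respect to the complex absolute value on ℂ and dist is the hyperbolic (Poincaré) distance on the upper half-plane. -/
open Complex ComplexConjugate in
theorem aux_norm (w : ℂ →L[ℝ] ℂ) (a b : ℂ) (ha : a ≠ 0)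
    (h : ∀ z, w z = a * z + b * conj z) : ‖w‖ = ‖a‖ + ‖b‖ := by
  apply le_antisymm
  · refine w.opNorm_le_bound (by positivity) fun z => ?_
    rw [h]
    refine (norm_add_le _ _).trans ?_
    rw [norm_mul, norm_mul, Complex.norm_conj, add_mul]
  · obtain ⟨u, hu, hq⟩ : ∃ u : ℂ, ‖u‖ = 1 ∧ (‖conj a * b‖ : ℂ) * u ^ 2 = conj a * b := by
      refine ⟨cexp ((arg (conj a * b) / 2 : ℝ) * I), Complex.norm_exp_ofReal_mul_I _, ?_⟩
      rw [← Complex.exp_nat_mul]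
      conv_rhs => rw [← Complex.norm_mul_exp_arg_mul_I (conj a * b)]
      congr 2
      push_cast
      ring
    have hle := w.le_opNorm u
    rw [hu, mul_one, h] at hle
    have huu : u * conj u = 1 := by
      rw [Complex.mul_conj, Complex.normSq_eq_norm_sq, hu]; simp
    have haa : conj a * a = (‖a‖ : ℂ) ^ 2 := by
      rw [mul_comm, Complex.mul_conj, Complex.normSq_eq_norm_sq]; simp
    have key : conj a * (a * u + b * conj u) = ((‖a‖ * (‖a‖ + ‖b‖) : ℝ) : ℂ) * u := by
      have : conj a * (a * u + b * conj u) = conj a * a * u + (conj a * b) * conj u := by ring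
      rw [this, ← hq, haa, norm_mul, Complex.norm_conj]
      push_cast
      linear_combination (‖a‖ * ‖b‖ : ℂ) * u * huu
    have := congrArg norm key
    rw [norm_mul, norm_mul, Complex.norm_conj, hu, Complex.norm_real, Real.norm_of_nonneg (by positivity), mul_one] at this
    have h3 := mul_left_cancel₀ (norm_ne_zero_iff.mpr ha) this
    linarith

open Complex ComplexConjugate in
/-- Thurston's Lipschitz metric on the Teichmüller space of unit-area flat tori equals
half the hyperbolic metric: if `w` is the unique ℝ-linear map sending the normalized
lattice basis of `τ` to that of `τ'`, then `log ‖w‖ = dist τ τ' / 2`. -/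
theorem stmt_0 (τ τ' : UpperHalfPlane) (w : ℂ →L[ℝ] ℂ)
    (h1 : w (1 / (Real.sqrt τ.im : ℂ)) = 1 / (Real.sqrt τ'.im : ℂ))
    (h2 : w ((τ : ℂ) / (Real.sqrt τ.im : ℂ)) = (τ' : ℂ) / (Real.sqrt τ'.im : ℂ)) :
    Real.log ‖w‖ = dist τ τ' / 2 := by
  have hy := τ.im_pos
  have hy' := τ'.im_pos
  have hs : 0 < √τ.im := Real.sqrt_pos.2 hy
  have hs' : 0 < √τ'.im := Real.sqrt_pos.2 hy'
  have hss : √τ.im * √τ.im = τ.im := Real.mul_self_sqrt hy.le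
  set s := √τ.im with hsd
  set s' := √τ'.im with hsd'
  have hsC : (s : ℂ) ≠ 0 := by exact_mod_cast hs.ne'
  have hsC' : (s' : ℂ) ≠ 0 := by exact_mod_cast hs'.ne'
  have e1 : w 1 = s / s' := by
    have : (1 : ℂ) = s • (1 / (s : ℂ)) := by rw [real_smul]; field_simp
    rw [this, map_smul, h1, real_smul]; ring
  have e2 : w τ = s / s' * τ' := by
    have : (τ : ℂ) = s • ((τ : ℂ) / (s : ℂ)) := by rw [real_smul]; field_simp
    rw [this, map_smul, h2, real_smul]; ring
  have hssC : (s : ℂ) * s = τ.im := by exact_mod_cast hss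
  have hτ : (τ : ℂ) = τ.re + τ.im * I := (Complex.re_add_im (τ : ℂ)).symm
  have hcτ : conj (τ : ℂ) = τ.re - τ.im * I := by
    rw [hτ]; simp [sub_eq_add_neg]
  have eI : s * s * w I = s / s' * (τ' - τ.re) := by
    have : w τ = τ.re * w 1 + τ.im * w I := by
      have h : (τ : ℂ) = τ.re • (1 : ℂ) + τ.im • I := by
        rw [real_smul, real_smul, mul_one]; exact hτ
      conv_lhs => rw [h]
      rw [map_add, map_smul, map_smul, real_smul, real_smul]
    rw [e1, e2] at this
    rw [hssC]
    linear_combination -this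
  have hne : (τ' : ℂ) - conj (τ : ℂ) ≠ 0 := by
    intro h
    have := congrArg Complex.im h
    simp at this
    linarith
  have hn := aux_norm w ((τ' - conj (τ : ℂ)) / (2 * I * s * s')) ((τ - τ') / (2 * I * s * s'))
    (div_ne_zero hne (by simp [hsC, hsC'])) (by
      intro z
      have hz : w z = z.re * w 1 + z.im * w I := by
        have h : z = z.re • (1 : ℂ) + z.im • I := by
          rw [real_smul, real_smul, mul_one]; exact (Complex.re_add_im z).symm
        conv_lhs => rw [h]
        rw [map_add, map_smul, map_smul, real_smul, real_smul]
      have eI' : w I = (τ' - τ.re) / (s * s') := by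
        field_simp at eI ⊢
        linear_combination eI
      have hcz : conj z = z.re - z.im * I := by
        apply Complex.ext <;> simp
      have hz2 : z = z.re + z.im * I := (Complex.re_add_im z).symm
      rw [hz, e1, eI', hcz, hcτ, hτ]
      rw [← hssC]
      field_simp
      linear_combination -((s : ℂ) ^ 2 * I + τ' - τ.re) * hz2)
  have hexp : ‖w‖ = Real.exp (dist τ τ' / 2) := by
    rw [UpperHalfPlane.exp_half_dist, hn, Real.sqrt_mul hy.le, ← hsd, ← hsd', norm_div, norm_div]
    have hd : ‖2 * I * (s : ℂ) * s'‖ = 2 * (s * s') := by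
      simp [abs_of_pos hs, abs_of_pos hs']; ring
    have hc : ‖(τ' : ℂ) - conj (τ : ℂ)‖ = dist (τ : ℂ) (conj (τ' : ℂ)) := by
      rw [Complex.dist_eq, ← Complex.norm_conj, map_sub, Complex.conj_conj, norm_sub_rev]
    rw [hd, hc, ← Complex.dist_eq, ← add_div, add_comm]
  rw [hexp, Real.log_exp]
end

section
/- Let τ and τ' be points of the upper half-plane ℍ ⊂ ℂ. Let w be the normalized affine map from τ to τ' (the unique ℝ-linear map with w(1/√(Im τ)) = 1/√(Im τ') and w(τ/√(Im τ)) = τ'/√(Im τ')), and let w' be the normalized affine map from τ' to τ. Then ‖w‖ = ‖w'‖, where ‖·‖ denotes the operator norm with respect to the complex absolute value on ℂ. (Hence Thurston's Lipschitz metric λ is symmetric on the Teichmüller space of the torus.) -/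
theorem aux_decomp (w : ℂ →L[ℝ] ℂ) (z : ℂ) : w z = z.re * w 1 + z.im * w Complex.I := by
  have : z = z.re • (1 : ℂ) + z.im • Complex.I := by
    apply Complex.ext <;> simp
  conv_lhs => rw [this]
  rw [map_add, map_smul, map_smul]
  simp

theorem aux_vals (τ τ' : UpperHalfPlane) (w : ℂ →L[ℝ] ℂ)
    (h1 : w (1 / (Real.sqrt τ.im : ℂ)) = 1 / (Real.sqrt τ'.im : ℂ))
    (h2 : w ((τ : ℂ) / (Real.sqrt τ.im : ℂ)) = (τ' : ℂ) / (Real.sqrt τ'.im : ℂ)) (z : ℂ) :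
    (w z).re = z.re * (√τ.im / √τ'.im) + z.im * ((τ'.re - τ.re) / (√τ.im * √τ'.im)) ∧
    (w z).im = z.im * (√τ'.im / √τ.im) := by
  have hs : 0 < √τ.im := Real.sqrt_pos.2 τ.im_pos
  have ht : 0 < √τ'.im := Real.sqrt_pos.2 τ'.im_pos
  have es : τ.im = √τ.im ^ 2 := (Real.sq_sqrt τ.im_pos.le).symm
  have et : τ'.im = √τ'.im ^ 2 := (Real.sq_sqrt τ'.im_pos.le).symm
  rw [aux_decomp] at h1 h2
  rw [aux_decomp w z]
  have a1 := congrArg Complex.re h1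
  have a2 := congrArg Complex.im h1
  have a3 := congrArg Complex.re h2
  have a4 := congrArg Complex.im h2
  rw [← Complex.ofReal_one, ← Complex.ofReal_div, ← Complex.ofReal_div] at a1 a2
  simp [Complex.div_ofReal_re, Complex.div_ofReal_im] at a1 a2 a3 a4
  simp only [Complex.add_re, Complex.add_im, Complex.re_ofReal_mul, Complex.im_ofReal_mul]
  generalize √τ.im = s at *
  generalize √τ'.im = t at *
  generalize (w 1).re = p at *
  generalize (w 1).im = q at *
  generalize (w Complex.I).re = u at *
  generalize (w Complex.I).im = v at *
  have hs' := hs.ne'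
  have ht' := ht.ne'
  have hq : q = 0 := by simpa [hs'] using a2
  have hp : p = s / t := by field_simp at a1 ⊢; linarith
  have hv : v = t / s := by rw [hq, mul_zero, zero_add] at a4; rw [eq_div_iff hs']; linarith
  have hu : u = (τ'.re - τ.re) / (s * t) := by
    subst hp; field_simp at a3 ⊢; linarith
  subst hq hp hv hu
  constructor <;> ring

theorem aux_le (τ τ' : UpperHalfPlane) (w w' : ℂ →L[ℝ] ℂ)
    (h1 : w (1 / (Real.sqrt τ.im : ℂ)) = 1 / (Real.sqrt τ'.im : ℂ))
    (h2 : w ((τ : ℂ) / (Real.sqrt τ.im : ℂ)) = (τ' : ℂ) / (Real.sqrt τ'.im : ℂ))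
    (h1' : w' (1 / (Real.sqrt τ'.im : ℂ)) = 1 / (Real.sqrt τ.im : ℂ))
    (h2' : w' ((τ' : ℂ) / (Real.sqrt τ'.im : ℂ)) = (τ : ℂ) / (Real.sqrt τ.im : ℂ)) :
    ‖w'‖ ≤ ‖w‖ := by
  refine ContinuousLinearMap.opNorm_le_bound _ (norm_nonneg _) fun z => ?_
  have key : ∀ y : ℂ, inner ℝ (Complex.I * w' z) y = inner ℝ (Complex.I * z) (w y) := by
    intro y
    obtain ⟨e1, e2⟩ := aux_vals τ τ' w h1 h2 y
    obtain ⟨e3, e4⟩ := aux_vals τ' τ w' h1' h2' z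
    have hs : √τ.im ≠ 0 := (Real.sqrt_pos.2 τ.im_pos).ne'
    have ht : √τ'.im ≠ 0 := (Real.sqrt_pos.2 τ'.im_pos).ne'
    simp only [Complex.inner, Complex.mul_re, Complex.mul_im, map_mul, Complex.conj_re, Complex.conj_im, Complex.conj_I, Complex.I_re, Complex.I_im, Complex.neg_re, Complex.neg_im, e1, e2, e3, e4]
    field_simp
    ring
  have h := key (Complex.I * w' z)
  rw [real_inner_self_eq_norm_sq] at h
  have h3 := real_inner_le_norm (Complex.I * z) (w (Complex.I * w' z))
  have h4 := w.le_opNorm (Complex.I * w' z)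
  rw [← h] at h3
  simp only [norm_mul, Complex.norm_I, one_mul] at h3 h4
  by_contra! hc
  have h5 : 0 < ‖w' z‖ := lt_of_le_of_lt (by positivity) hc
  nlinarith [mul_le_mul_of_nonneg_left h4 (norm_nonneg z), mul_lt_mul_of_pos_right hc h5]


/-- The normalized affine map from `τ` to `τ'` and the one from `τ'` to `τ` have the
same operator norm; hence Thurston's Lipschitz metric on `𝒯₁` is symmetric. -/
theorem stmt_1 (τ τ' : UpperHalfPlane) (w w' : ℂ →L[ℝ] ℂ)
    (h1 : w (1 / (Real.sqrt τ.im : ℂ)) = 1 / (Real.sqrt τ'.im : ℂ))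
    (h2 : w ((τ : ℂ) / (Real.sqrt τ.im : ℂ)) = (τ' : ℂ) / (Real.sqrt τ'.im : ℂ))
    (h1' : w' (1 / (Real.sqrt τ'.im : ℂ)) = 1 / (Real.sqrt τ.im : ℂ))
    (h2' : w' ((τ' : ℂ) / (Real.sqrt τ'.im : ℂ)) = (τ : ℂ) / (Real.sqrt τ.im : ℂ)) :
    ‖w‖ = ‖w'‖ := by
  exact le_antisymm (aux_le τ' τ w' w h1' h2' h1 h2) (aux_le τ τ' w w' h1 h2 h1' h2')
end

section
/- Let c, d ∈ ℝ with d ≠ 0, and let φ : ℂ → ℂ be the ℝ-linear map given by φ(x + iy) = (x/d + c·y) + i·d·y for x, y ∈ ℝ. Then the operator norm (equivalently, the Lipschitz constant) of φ with respect to the complex absolute value equals √( (d² + d⁻² + c² + √((d² + d⁻² + c²)² − 4)) / 2 ). -/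
/-- The Lipschitz constant (operator norm) of the ℝ-linear map
`x + iy ↦ (x/d + c·y) + i·d·y` is
`√((d² + d⁻² + c² + √((d² + d⁻² + c²)² − 4))/2)`. -/
theorem stmt_2 (c d : ℝ) (hd : d ≠ 0) (φ : ℂ →L[ℝ] ℂ)
    (hφ : ∀ x y : ℝ, φ (x + y * Complex.I) = (x / d + c * y) + d * y * Complex.I) :
    ‖φ‖ = Real.sqrt ((d ^ 2 + d⁻¹ ^ 2 + c ^ 2 +
      Real.sqrt ((d ^ 2 + d⁻¹ ^ 2 + c ^ 2) ^ 2 - 4)) / 2) := by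
  have hn : ∀ x y : ℝ, ‖φ (x + y * Complex.I)‖ ^ 2 = (d⁻¹ * x + c * y) ^ 2 + (d * y) ^ 2 := by
    intro x y
    have h : φ (x + y * Complex.I)
        = ((d⁻¹ * x + c * y : ℝ) : ℂ) + ((d * y : ℝ) : ℂ) * Complex.I := by
      rw [hφ]; push_cast; ring
    rw [h, Complex.sq_norm, Complex.normSq_add_mul_I]
  have hz : ∀ x y : ℝ, ‖(x + y * Complex.I : ℂ)‖ ^ 2 = x ^ 2 + y ^ 2 := by
    intro x y
    rw [Complex.sq_norm, Complex.normSq_add_mul_I]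
  have hed : d⁻¹ * d = 1 := inv_mul_cancel₀ hd
  generalize d⁻¹ = e at *
  have hs0 : 0 ≤ (d ^ 2 + e ^ 2 + c ^ 2) ^ 2 - 4 := by
    have : 2 ≤ d ^ 2 + e ^ 2 + c ^ 2 := by nlinarith [sq_nonneg (d - e), sq_nonneg c]
    nlinarith
  have hs := Real.sq_sqrt hs0
  have hsn := Real.sqrt_nonneg ((d ^ 2 + e ^ 2 + c ^ 2) ^ 2 - 4)
  generalize Real.sqrt ((d ^ 2 + e ^ 2 + c ^ 2) ^ 2 - 4) = s at *
  obtain ⟨l, hl⟩ : ∃ l, l = (d ^ 2 + e ^ 2 + c ^ 2 + s) / 2 := ⟨_, rfl⟩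
  rw [← hl]
  have hl0 : 0 ≤ l := by rw [hl]; positivity
  have hsl : s = 2 * l - (d ^ 2 + e ^ 2 + c ^ 2) := by linarith
  obtain ⟨A, hA⟩ : ∃ A, A = l - e ^ 2 := ⟨_, rfl⟩
  obtain ⟨C, hC⟩ : ∃ C, C = l - c ^ 2 - d ^ 2 := ⟨_, rfl⟩
  have hed2 : e ^ 2 * d ^ 2 = 1 := by rw [← mul_pow, hed, one_pow]
  have hAC : A * C = (e * c) ^ 2 := by
    rw [hsl] at hs
    rw [hA, hC]
    linarith
  have hsum : 0 ≤ A + C := by rw [hA, hC]; linarith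
  have hA0 : 0 ≤ A := by
    by_contra h
    nlinarith [sq_nonneg (e * c)]
  have hC0 : 0 ≤ C := by
    by_contra h
    nlinarith [sq_nonneg (e * c)]
  have hform : ∀ x y : ℝ, l * (x ^ 2 + y ^ 2) - ((e * x + c * y) ^ 2 + (d * y) ^ 2)
      = A * x ^ 2 - 2 * (e * c) * x * y + C * y ^ 2 := by
    intro x y; rw [hA, hC]; ring
  apply le_antisymm
  · refine φ.opNorm_le_bound (Real.sqrt_nonneg _) fun z => ?_
    rw [← Complex.re_add_im z]
    refine le_trans (le_abs_self _) (abs_le_of_sq_le_sq ?_ (by positivity))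
    rw [mul_pow, Real.sq_sqrt hl0, hn, hz]
    have := hform z.re z.im
    generalize z.re = x at *
    generalize z.im = y at *
    suffices 0 ≤ A * x ^ 2 - 2 * (e * c) * x * y + C * y ^ 2 by linarith
    rcases hsum.eq_or_lt with h | h
    · have h1 : A = 0 := by linarith
      have h2 : C = 0 := by linarith
      have h3 : e * c = 0 := by
        rw [h1, zero_mul] at hAC
        exact pow_eq_zero_iff (two_ne_zero) |>.1 hAC.symm
      rw [h1, h2, h3]; simp
    · refine nonneg_of_mul_nonneg_right (a := A + C) ?_ h
      have : (A + C) * (A * x ^ 2 - 2 * (e * c) * x * y + C * y ^ 2)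
          = (A * x - e * c * y) ^ 2 + (e * c * x - C * y) ^ 2 := by
        linear_combination (x ^ 2 + y ^ 2) * hAC
      rw [this]; positivity
  · obtain ⟨x, y, hpos, h0⟩ : ∃ x y : ℝ, 0 < x ^ 2 + y ^ 2 ∧
        A * x ^ 2 - 2 * (e * c) * x * y + C * y ^ 2 = 0 := by
      rcases hA0.eq_or_lt with h | h
      · exact ⟨1, 0, by norm_num, by rw [← h]; ring⟩
      · exact ⟨e * c, A, by positivity, by linear_combination A * hAC⟩
    have h1 := φ.le_opNorm (x + y * Complex.I)
    have h2 := pow_le_pow_left₀ (norm_nonneg _) h1 2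
    rw [mul_pow, hn, hz] at h2
    have h3 := hform x y
    rw [h0] at h3
    apply Real.sqrt_le_iff.2 ⟨norm_nonneg _, ?_⟩
    refine le_of_mul_le_mul_right ?_ hpos
    linarith
end

section
/- Let ω₁, ω₂ ∈ ℂ be linearly independent over ℝ, let ζ₁, ζ₂ ∈ ℂ, and let w : ℂ → ℂ be the unique ℝ-linear map with w(ω₁) = ζ₁ and w(ω₂) = ζ₂. Suppose g : ℂ → ℂ satisfies g(0) = 0 and g(z + m·ω₁ + n·ω₂) = g(z) + m·ζ₁ + n·ζ₂ for all z ∈ ℂ and all integers m, n, and suppose g is Lipschitz with constant K ≥ 0. Then w is Lipschitz with constant K, i.e. ‖w‖ ≤ K. (Thus the lattice-equivariant linear map realizes the minimal Lipschitz constant among all lattice-equivariant maps.) -/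
/-- The lattice-equivariant ℝ-linear map `w` (with `w ωᵢ = ζᵢ`) has minimal Lipschitz
constant among all lattice-equivariant maps: if `g` fixes `0`, is `K`-Lipschitz and
equivariant, then `‖w‖ ≤ K`. -/
theorem stmt_3 (ω₁ ω₂ ζ₁ ζ₂ : ℂ) (hindep : LinearIndependent ℝ ![ω₁, ω₂])
    (w : ℂ →L[ℝ] ℂ) (hw1 : w ω₁ = ζ₁) (hw2 : w ω₂ = ζ₂)
    (g : ℂ → ℂ) (hg0 : g 0 = 0)
    (heq : ∀ (z : ℂ) (m n : ℤ), g (z + m * ω₁ + n * ω₂) = g z + m * ζ₁ + n * ζ₂)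
    (K : ℝ) (hK : 0 ≤ K)
    (hLip : ∀ x y : ℂ, ‖g x - g y‖ ≤ K * ‖x - y‖) :
    ‖w‖ ≤ K := by
  have hlat : ∀ m n : ℤ, ‖w ((m : ℝ) • ω₁ + (n : ℝ) • ω₂)‖ ≤ K * ‖(m : ℝ) • ω₁ + (n : ℝ) • ω₂‖ := by
    intro m n
    have h1 := heq 0 m n
    have h2 := hLip (0 + m * ω₁ + n * ω₂) 0
    rw [h1, hg0] at h2
    rw [map_add, map_smul, map_smul, hw1, hw2]
    simpa using h2
  have hrat : ∀ p q : ℚ, ‖w ((p : ℝ) • ω₁ + (q : ℝ) • ω₂)‖ ≤ K * ‖(p : ℝ) • ω₁ + (q : ℝ) • ω₂‖ := by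
    intro p q
    have hp : (0 : ℝ) < p.den := by exact_mod_cast p.den_pos
    have hq : (0 : ℝ) < q.den := by exact_mod_cast q.den_pos
    have hD : (0 : ℝ) < p.den * q.den := mul_pos hp hq
    have h := hlat (p.num * q.den) (q.num * p.den)
    have e : (((p.num * q.den : ℤ) : ℝ) • ω₁ + ((q.num * p.den : ℤ) : ℝ) • ω₂)
        = ((p.den : ℝ) * q.den) • ((p : ℝ) • ω₁ + (q : ℝ) • ω₂) := by
      have h1 : (p.num : ℝ) = p * p.den := by exact_mod_cast (Rat.mul_den_eq_num p).symm
      have h2 : (q.num : ℝ) = q * q.den := by exact_mod_cast (Rat.mul_den_eq_num q).symm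
      rw [smul_add, smul_smul, smul_smul]
      push_cast
      rw [h1, h2]
      congr 2 <;> ring
    rw [e, map_smul, norm_smul, norm_smul, Real.norm_of_nonneg hD.le] at h
    have h' : ((p.den : ℝ) * q.den) * ‖w ((p : ℝ) • ω₁ + (q : ℝ) • ω₂)‖
        ≤ ((p.den : ℝ) * q.den) * (K * ‖(p : ℝ) • ω₁ + (q : ℝ) • ω₂‖) := by linarith
    exact le_of_mul_le_mul_left h' hD
  have hreal : ∀ a b : ℝ, ‖w (a • ω₁ + b • ω₂)‖ ≤ K * ‖a • ω₁ + b • ω₂‖ := by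
    intro a b
    refine Rat.denseRange_cast.induction_on₂
      (p := fun a b : ℝ => ‖w (a • ω₁ + b • ω₂)‖ ≤ K * ‖a • ω₁ + b • ω₂‖) ?_ hrat a b
    exact isClosed_le (by fun_prop) (by fun_prop)
  refine w.opNorm_le_bound hK fun x => ?_
  have hspan := hindep.span_eq_top_of_card_eq_finrank (by simp)
  have hx : x ∈ Submodule.span ℝ (Set.range ![ω₁, ω₂]) := by rw [hspan]; trivial
  rw [Matrix.range_cons, Matrix.range_cons, Matrix.range_empty, Set.union_empty,
    Set.singleton_union, Submodule.mem_span_pair] at hx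
  obtain ⟨a, b, rfl⟩ := hx
  exact hreal a b
end

section
/- Let ω₁, ω₂ ∈ ℂ be linearly independent over ℝ, let ζ₁, ζ₂ ∈ ℂ, and let w : ℂ → ℂ be the unique ℝ-linear map with w(ω₁) = ζ₁ and w(ω₂) = ζ₂. Suppose g : ℂ → ℂ is continuous, g(0) = 0, and g(z + m·ω₁ + n·ω₂) = g(z) + m·ζ₁ + n·ζ₂ for all z ∈ ℂ and all integers m, n. Define gₖ(z) = g(k·z)/k for each positive integer k. Then the sequence (gₖ) converges uniformly on all of ℂ to w as k → ∞. -/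
/-- If `g : ℂ → ℂ` is continuous, fixes `0` and is lattice-equivariant
(`g (z + mω₁ + nω₂) = g z + mζ₁ + nζ₂`), then the rescalings `z ↦ g (k z) / k`
converge uniformly on all of ℂ to the ℝ-linear map `w` with `w ωᵢ = ζᵢ`. -/
theorem stmt_4 (ω₁ ω₂ ζ₁ ζ₂ : ℂ) (hindep : LinearIndependent ℝ ![ω₁, ω₂])
    (w : ℂ →L[ℝ] ℂ) (hw1 : w ω₁ = ζ₁) (hw2 : w ω₂ = ζ₂)
    (g : ℂ → ℂ) (hg : Continuous g) (hg0 : g 0 = 0)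
    (heq : ∀ (z : ℂ) (m n : ℤ), g (z + m * ω₁ + n * ω₂) = g z + m * ζ₁ + n * ζ₂) :
    TendstoUniformly (fun (k : ℕ) (z : ℂ) => g (k * z) / k) (fun z => w z)
      Filter.atTop := by
  have hrep : ∀ z : ℂ, ∃ a b : ℝ, z = a * ω₁ + b * ω₂ := by
    intro z
    let B := basisOfLinearIndependentOfCardEqFinrank hindep
      (by simp [Complex.finrank_real_complex])
    refine ⟨B.repr z 0, B.repr z 1, ?_⟩
    have h := B.sum_repr z
    rw [Fin.sum_univ_two] at h
    simp only [B, coe_basisOfLinearIndependentOfCardEqFinrank, Matrix.cons_val_zero,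
      Matrix.cons_val_one, Complex.real_smul] at h
    exact h.symm
  have hcomp : IsCompact ((Set.Icc (0:ℝ) 1) ×ˢ (Set.Icc (0:ℝ) 1)) :=
    isCompact_Icc.prod isCompact_Icc
  have hcont : Continuous (fun p : ℝ × ℝ =>
      g (p.1 * ω₁ + p.2 * ω₂) - w (p.1 * ω₁ + p.2 * ω₂)) := by fun_prop
  obtain ⟨C, hC⟩ := hcomp.exists_bound_of_continuousOn hcont.continuousOn
  have hbound : ∀ z : ℂ, ‖g z - w z‖ ≤ C := by
    intro z
    obtain ⟨a, b, rfl⟩ := hrep z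
    have h1 := hC (Int.fract a, Int.fract b)
      ⟨⟨Int.fract_nonneg a, (Int.fract_lt_one a).le⟩,
        ⟨Int.fract_nonneg b, (Int.fract_lt_one b).le⟩⟩
    have e : (a : ℂ) * ω₁ + b * ω₂ = ((Int.fract a : ℝ) * ω₁ + (Int.fract b : ℝ) * ω₂)
        + (⌊a⌋ : ℤ) * ω₁ + (⌊b⌋ : ℤ) * ω₂ := by
      simp only [Int.fract]
      push_cast
      ring
    have hz : ∀ (m : ℤ) (x : ℂ), w (m * x) = m * w x := by
      intro m x
      have := w.map_smul (m : ℝ) x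
      simpa [Complex.real_smul] using this
    rw [e, heq, map_add, map_add, hz, hz, hw1, hw2]
    refine le_trans (le_of_eq (congrArg norm ?_)) h1
    dsimp only
    ring
  rw [Metric.tendstoUniformly_iff]
  intro ε hε
  obtain ⟨N, hN⟩ := exists_nat_gt (C / ε)
  filter_upwards [Filter.eventually_ge_atTop (N + 1)] with k hk z
  have hk0 : (0 : ℝ) < k := by exact_mod_cast (by omega : 0 < k)
  have hkC : (k : ℂ) ≠ 0 := by exact_mod_cast hk0.ne'
  have hNk : (N : ℝ) ≤ k := by exact_mod_cast (by omega : N ≤ k)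
  have hwk : w (k * z) = k * w z := by
    have := w.map_smul (k : ℝ) z
    simpa [Complex.real_smul] using this
  have h2 := hbound (k * z)
  have e2 : g (k * z) / k - w z = (g (k * z) - w (k * z)) / k := by
    rw [hwk]
    field_simp
  rw [dist_comm, dist_eq_norm, e2, norm_div, Complex.norm_natCast, div_lt_iff₀ hk0]
  rw [div_lt_iff₀ hε] at hN
  nlinarith
end

section
/- For every real r > 1, the set of functions F : ℝ² → ℝ² satisfying (i) F(0) = 0, (ii) F(v + (m, n)) = F(v) + (r·m, n/r) for all v ∈ ℝ² and all integers m, n, and (iii) F is Lipschitz with constant r (with respect to the Euclidean norm), is infinite. (That is, there are infinitely many distinct marking-respecting maps between the square torus ℝ²/ℤ² and the rectangular torus ℝ²/(rℤ × (1/r)ℤ), all realizing the extremal Lipschitz constant r.) -/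
/-- There are infinitely many marking-respecting maps between the square torus and the
rectangular torus `ℝ²/(rℤ × (1/r)ℤ)` realizing the extremal Lipschitz constant `r`. -/
theorem stmt_5 (r : ℝ) (hr : 1 < r) :
    Set.Infinite {F : EuclideanSpace ℝ (Fin 2) → EuclideanSpace ℝ (Fin 2) |
      F 0 = 0 ∧
      (∀ (v : EuclideanSpace ℝ (Fin 2)) (m n : ℤ),
        F (v + (WithLp.equiv 2 (Fin 2 → ℝ)).symm ![(m : ℝ), (n : ℝ)]) =
          F v + (WithLp.equiv 2 (Fin 2 → ℝ)).symm ![r * m, n / r]) ∧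
      (∀ u v : EuclideanSpace ℝ (Fin 2), ‖F u - F v‖ ≤ r * ‖u - v‖)} := by
  have hr0 : 0 < r := by linarith
  have hri : 1 / r < r := by
    rw [div_lt_iff₀ hr0]; nlinarith
  have hpi := Real.pi_pos
  have hc : 0 < (r - 1 / r) / (2 * Real.pi) := by
    apply div_pos <;> linarith
  refine Set.infinite_of_injOn_mapsTo
    (f := fun (t : ℝ) (v : EuclideanSpace ℝ (Fin 2)) =>
      (!₂[r * v 0, v 1 / r + t * Real.sin (2 * Real.pi * v 1)] : EuclideanSpace ℝ (Fin 2)))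
    (s := Set.Icc 0 ((r - 1 / r) / (2 * Real.pi))) ?_ ?_ (Set.Icc_infinite hc)
  · intro s _ t _ h
    have h1 := congrFun h (!₂[0, 1 / 4])
    have h2 := congrArg (fun w : EuclideanSpace ℝ (Fin 2) => w 1) h1
    have e : 2 * Real.pi * (1 / 4) = Real.pi / 2 := by ring
    simp only [PiLp.toLp_apply, Matrix.cons_val_one, Matrix.cons_val_fin_one, e,
      Real.sin_pi_div_two] at h2
    linarith
  · intro t ht
    obtain ⟨ht0, ht1⟩ := ht
    rw [le_div_iff₀ (by positivity)] at ht1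
    refine ⟨?_, ?_, ?_⟩
    · ext i
      fin_cases i <;> simp
    · intro v m n
      have e : Real.sin (2 * Real.pi * (v 1 + n)) = Real.sin (2 * Real.pi * v 1) := by
        rw [← Real.sin_add_int_mul_two_pi (2 * Real.pi * v 1) n]
        congr 1; ring
      ext i
      fin_cases i
      · simp; ring
      · simp [e]; ring
    · intro u v
      have hs : |Real.sin (2 * Real.pi * u 1) - Real.sin (2 * Real.pi * v 1)|
          ≤ 2 * Real.pi * |u 1 - v 1| := by
        have h := Real.abs_sin_sub_sin_le (2 * Real.pi * u 1) (2 * Real.pi * v 1)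
        rwa [← mul_sub, abs_mul, abs_of_pos (by positivity : 0 < 2 * Real.pi)] at h
      have hb : |(u 1 / r + t * Real.sin (2 * Real.pi * u 1)) -
          (v 1 / r + t * Real.sin (2 * Real.pi * v 1))| ≤ r * |u 1 - v 1| := by
        have e : (u 1 / r + t * Real.sin (2 * Real.pi * u 1)) -
          (v 1 / r + t * Real.sin (2 * Real.pi * v 1)) = 1 / r * (u 1 - v 1) +
            t * (Real.sin (2 * Real.pi * u 1) - Real.sin (2 * Real.pi * v 1)) := by ring
        rw [e]
        refine (abs_add_le _ _).trans ?_
        rw [abs_mul, abs_mul, abs_of_nonneg ht0, abs_of_pos (by positivity : 0 < 1 / r)]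
        have h1 := mul_le_mul_of_nonneg_left hs ht0
        have h2 := mul_le_mul_of_nonneg_right ht1 (abs_nonneg (u 1 - v 1))
        linarith
      have hb2 := pow_le_pow_left₀ (abs_nonneg _) hb 2
      rw [mul_pow, sq_abs, sq_abs] at hb2
      refine (pow_le_pow_iff_left₀ (norm_nonneg _) (by positivity) two_ne_zero).1 ?_
      rw [mul_pow, EuclideanSpace.norm_sq_eq, EuclideanSpace.norm_sq_eq]
      simp only [Fin.sum_univ_two, Real.norm_eq_abs, sq_abs, PiLp.sub_apply, PiLp.toLp_apply,
        Matrix.cons_val_zero, Matrix.cons_val_one, Matrix.cons_val_fin_one]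
      linarith
end

section
/- Let r > 1, let ε ∈ (−1/2, 1/2), and let δ ∈ ℝ satisfy max(0, 1/r − r/2 + ε·r) < δ < min(1/r, r/2 + ε·r). Define F : ℝ² → ℝ² by F(x, y) = (r·x, ((1/r − δ)/(1/2 − ε))·y) if y ≤ 1/2 − ε, and F(x, y) = (r·x, (1/r − δ) + (δ/(1/2 + ε))·(y − (1/2 − ε))) if y ≥ 1/2 − ε. Then F is well-defined (the two formulas agree when y = 1/2 − ε) and F is Lipschitz with constant r with respect to the Euclidean norm on ℝ². -/
/-- The paper's piecewise-linear non-affine map from the square torus to the rectangular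
torus: it is well defined (the two formulas agree at `y = 1/2 - ε`) and is Lipschitz with
the extremal constant `r`. -/
theorem stmt_6 (r ε δ : ℝ) (hr : 1 < r) (hε : -(1/2) < ε) (hε' : ε < 1/2)
    (hδ1 : max 0 (1/r - r/2 + ε * r) < δ) (hδ2 : δ < min (1/r) (r/2 + ε * r))
    (F : EuclideanSpace ℝ (Fin 2) → EuclideanSpace ℝ (Fin 2))
    (hF : ∀ x y : ℝ,
      F ((WithLp.equiv 2 (Fin 2 → ℝ)).symm ![x, y]) =
        if y ≤ 1/2 - ε then
          (WithLp.equiv 2 (Fin 2 → ℝ)).symm ![r * x, ((1/r - δ) / (1/2 - ε)) * y]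
        else
          (WithLp.equiv 2 (Fin 2 → ℝ)).symm
            ![r * x, (1/r - δ) + (δ / (1/2 + ε)) * (y - (1/2 - ε))]) :
    ((1/r - δ) / (1/2 - ε)) * (1/2 - ε)
        = (1/r - δ) + (δ / (1/2 + ε)) * ((1/2 - ε) - (1/2 - ε)) ∧
      ∀ u v : EuclideanSpace ℝ (Fin 2), ‖F u - F v‖ ≤ r * ‖u - v‖ := by
  have hc : 0 < 1/2 - ε := by linarith
  have hd : 0 < 1/2 + ε := by linarith
  obtain ⟨h1, h2⟩ := max_lt_iff.1 hδ1
  obtain ⟨h3, h4⟩ := lt_min_iff.1 hδ2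
  have ha0 : 0 ≤ (1/r - δ) / (1/2 - ε) := div_nonneg (by linarith) hc.le
  have har : (1/r - δ) / (1/2 - ε) ≤ r := by
    rw [div_le_iff₀ hc]; linarith
  have hb0 : 0 ≤ δ / (1/2 + ε) := div_nonneg h1.le hd.le
  have hbr : δ / (1/2 + ε) ≤ r := by
    rw [div_le_iff₀ hd]; linarith
  have hac : (1/r - δ) / (1/2 - ε) * (1/2 - ε) = 1/r - δ := div_mul_cancel₀ _ hc.ne'
  refine ⟨by rw [hac]; ring, ?_⟩
  generalize (1/r - δ) / (1/2 - ε) = a at *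
  generalize δ / (1/2 + ε) = b at *
  rw [← hac] at hF
  generalize 1/2 - ε = c at *
  have hF0 : ∀ u, F u 0 = r * u 0 := by
    intro u
    have hu : u = (WithLp.equiv 2 (Fin 2 → ℝ)).symm ![u 0, u 1] := by
      ext i; fin_cases i <;> rfl
    have := hF (u 0) (u 1)
    rw [← hu] at this
    rw [this]; split_ifs <;> rfl
  have hF1 : ∀ u, F u 1 = if u 1 ≤ c then a * u 1 else a * c + b * (u 1 - c) := by
    intro u
    have hu : u = (WithLp.equiv 2 (Fin 2 → ℝ)).symm ![u 0, u 1] := by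
      ext i; fin_cases i <;> rfl
    have := hF (u 0) (u 1)
    rw [← hu] at this
    rw [this]; split_ifs <;> rfl
  have mono : ∀ y z : ℝ, y ≤ z →
      |(if y ≤ c then a * y else a * c + b * (y - c)) -
        (if z ≤ c then a * z else a * c + b * (z - c))| ≤ r * |y - z| := by
    intro y z hyz
    rw [abs_of_nonpos (sub_nonpos.2 hyz), abs_le]
    split_ifs with p q q
    · constructor <;> nlinarith
    · push Not at q
      constructor <;> nlinarith [mul_nonneg ha0 (sub_nonneg.2 p),
        mul_nonneg hb0 (sub_nonneg.2 q.le), mul_nonneg (sub_nonneg.2 har) (sub_nonneg.2 p),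
        mul_nonneg (sub_nonneg.2 hbr) (sub_nonneg.2 q.le),
        mul_nonneg (by linarith : 0 ≤ r) (sub_nonneg.2 hyz)]
    · exact absurd (hyz.trans q) p
    · constructor <;> nlinarith
  have key : ∀ u v : EuclideanSpace ℝ (Fin 2), |F u 1 - F v 1| ≤ r * |u 1 - v 1| := by
    intro u v
    rw [hF1, hF1]
    rcases le_total (u 1) (v 1) with h | h
    · exact mono _ _ h
    · rw [abs_sub_comm, abs_sub_comm (u 1)]; exact mono _ _ h
  intro u v
  have hr0 : 0 ≤ r := by linarith
  refine (sq_le_sq₀ (norm_nonneg _) (by positivity)).1 ?_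
  rw [mul_pow, EuclideanSpace.norm_sq_eq, EuclideanSpace.norm_sq_eq]
  simp only [Fin.sum_univ_two, PiLp.sub_apply, Real.norm_eq_abs, sq_abs]
  have k := pow_le_pow_left₀ (abs_nonneg _) (key u v) 2
  rw [mul_pow, sq_abs, sq_abs] at k
  rw [hF0, hF0]
  nlinarith
end

section
/- Let ω₁, ω₂ ∈ ℂ be linearly independent over ℝ with |Im(conj(ω₁)·ω₂)| = 1, and let ζ₁, ζ₂ ∈ ℂ be linearly independent over ℝ with |Im(conj(ζ₁)·ζ₂)| = 1 (i.e., both fundamental parallelograms have area 1). Suppose g : ℂ → ℂ is surjective, satisfies g(z + m·ω₁ + n·ω₂) = g(z) + m·ζ₁ + n·ζ₂ for all z ∈ ℂ and all integers m, n, and is Lipschitz with constant 1. Then g is an isometry: |g(x) − g(y)| = |x − y| for all x, y ∈ ℂ. -/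
/-- A quadratic polynomial inequality valid on integers pairs extends to reals. -/
lemma quad_int_real (a b c : ℝ)
    (h : ∀ m n : ℤ, 0 ≤ a * m ^ 2 + 2 * b * m * n + c * n ^ 2) (x : ℝ) :
    0 ≤ a * x ^ 2 + 2 * b * x + c := by
  have hc : IsClosed {x : ℝ | 0 ≤ a * x ^ 2 + 2 * b * x + c} :=
    isClosed_le continuous_const (by fun_prop)
  have hd : DenseRange ((↑) : ℚ → ℝ) := Rat.denseRange_cast
  refine hd.induction_on (p := fun x => 0 ≤ a * x ^ 2 + 2 * b * x + c) x hc ?_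
  intro q
  have h1 := h q.num q.den
  have hq : (q : ℝ) = q.num / q.den := by exact_mod_cast (Rat.num_div_den q).symm
  have hp : (0 : ℝ) < q.den := by exact_mod_cast q.den_pos
  have : a * (q : ℝ) ^ 2 + 2 * b * q + c =
      (a * q.num ^ 2 + 2 * b * q.num * ((q.den : ℤ) : ℝ) + c * ((q.den : ℤ) : ℝ) ^ 2)
        / (q.den : ℝ) ^ 2 := by
    rw [hq]; push_cast; field_simp
  show 0 ≤ a * (q : ℝ) ^ 2 + 2 * b * q + c
  rw [this]
  positivity

lemma forms_eq (a b c a' b' c' : ℝ) (ha' : 0 ≤ a')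
    (h1 : a * c - b ^ 2 = 1) (h2 : a' * c' - b' ^ 2 = 1)
    (h : ∀ m n : ℤ, a' * m ^ 2 + 2 * b' * m * n + c' * n ^ 2
      ≤ a * m ^ 2 + 2 * b * m * n + c * n ^ 2) : a = a' ∧ b = b' ∧ c = c' := by
  have key := quad_int_real (a - a') (b - b') (c - c') (fun m n => by nlinarith [h m n])
  have hda : 0 ≤ a - a' := by have := h 1 0; norm_num at this; linarith
  have hdc : 0 ≤ c - c' := by have := h 0 1; norm_num at this; linarith
  have hpos : 0 < a' := by
    rcases ha'.lt_or_eq with h | h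
    · exact h
    · subst h; nlinarith [sq_nonneg b']
  have hdet : 0 ≤ (a - a') * (c - c') - (b - b') ^ 2 := by
    have := discrim_le_zero (a := a - a') (b := 2 * (b - b')) (c := c - c')
      (fun x => by have := key x; nlinarith)
    unfold discrim at this
    nlinarith
  have hmix : a' * (c - c') + c' * (a - a') - 2 * b' * (b - b') ≤ 0 := by nlinarith
  have k1 := key (-b' / a')
  have k2 : 0 ≤ (a - a') * b' ^ 2 - 2 * (b - b') * b' * a' + (c - c') * a' ^ 2 := by
    have e : (a - a') * b' ^ 2 - 2 * (b - b') * b' * a' + (c - c') * a' ^ 2 =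
      a' ^ 2 * ((a - a') * (-b' / a') ^ 2 + 2 * (b - b') * (-b' / a') + (c - c')) := by
      field_simp
      ring
    rw [e]; positivity
  have hm2 := mul_nonneg ha' (neg_nonneg.2 hmix)
  have ea : a - a' = 0 := by
    have : a' * c' = 1 + b' ^ 2 := by linarith
    have h3 : a' * c' * (a - a') = (1 + b' ^ 2) * (a - a') := by rw [this]
    nlinarith
  have eb : b - b' = 0 := by
    rw [ea] at hdet
    have : (b - b') ^ 2 = 0 := le_antisymm (by linarith) (sq_nonneg _)
    simpa using this
  have ec : c - c' = 0 := by
    rw [ea, eb] at hmix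
    nlinarith
  exact ⟨by linarith, by linarith, by linarith⟩

lemma normsq_comb (u v : ℂ) (x y : ℝ) :
    ‖(x : ℂ) * u + y * v‖ ^ 2 = (u.re ^ 2 + u.im ^ 2) * x ^ 2
      + 2 * (u.re * v.re + u.im * v.im) * x * y + (v.re ^ 2 + v.im ^ 2) * y ^ 2 := by
  rw [Complex.sq_norm, Complex.normSq_apply]
  simp
  ring

/-- Rigidity along one lattice direction. -/
lemma line_rigid (g : ℂ → ℂ) (w v : ℂ) (hn : ‖w‖ = ‖v‖)
    (heq : ∀ (z : ℂ) (m : ℤ), g (z + m * w) = g z + m * v)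
    (hLip : ∀ x y : ℂ, ‖g x - g y‖ ≤ ‖x - y‖) (z : ℂ) (t : ℝ) :
    g (z + t * w) = g z + t * v := by
  have unit : ∀ (z : ℂ) (t : ℝ), 0 ≤ t → t ≤ 1 → g (z + t * w) = g z + t * v := by
    intro z t h0 h1
    have e1 : g (z + w) = g z + v := by simpa using heq z 1
    have d1 : dist (g z) (g (z + t * w)) ≤ t * dist (g z) (g z + v) := by
      rw [dist_eq_norm, dist_eq_norm]
      refine (hLip _ _).trans (le_of_eq ?_)
      simp [← hn, abs_of_nonneg h0]
    have d2 : dist (g (z + t * w)) (g z + v) ≤ (1 - t) * dist (g z) (g z + v) := by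
      rw [← e1, dist_eq_norm, dist_eq_norm, e1, ← e1]
      refine (hLip _ _).trans (le_of_eq ?_)
      have : z + t * w - (z + w) = -(((1 - t : ℝ) : ℂ) * w) := by push_cast; ring
      rw [this, norm_neg, norm_mul, Complex.norm_real, Real.norm_of_nonneg (by linarith), e1]
      simp [hn]
    have s := dist_triangle (g z) (g (z + t * w)) (g z + v)
    have := eq_lineMap_of_dist_eq_mul_of_dist_eq_mul (x := g z) (y := g (z + t * w))
      (z := g z + v) (r := t) (by linarith) (by linarith)
    rw [this, AffineMap.lineMap_apply]
    simp [add_comm]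
  have e : z + t * w = (z + (⌊t⌋ : ℤ) * w) + (Int.fract t : ℝ) * w := by
    have : (t : ℂ) = ((⌊t⌋ : ℝ) : ℂ) + ((Int.fract t : ℝ) : ℂ) := by
      rw [← Complex.ofReal_add, Int.floor_add_fract]
    rw [this]; push_cast; ring
  have e' : (t : ℂ) = ((⌊t⌋ : ℤ) : ℂ) + ((Int.fract t : ℝ) : ℂ) := by
    have : (t : ℂ) = ((⌊t⌋ : ℝ) : ℂ) + ((Int.fract t : ℝ) : ℂ) := by
      rw [← Complex.ofReal_add, Int.floor_add_fract]
    rw [this]; push_cast; ring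
  rw [e, unit _ _ (Int.fract_nonneg t) (Int.fract_lt_one t).le, heq, e']
  ring

/-- A surjective 1-Lipschitz lattice-equivariant map between unit-area flat tori is an
isometry (Thurston's argument that the Lipschitz metric separates points). -/
theorem stmt_7 (ω₁ ω₂ ζ₁ ζ₂ : ℂ)
    (hω : LinearIndependent ℝ ![ω₁, ω₂]) (hζ : LinearIndependent ℝ ![ζ₁, ζ₂])
    (hωarea : |((starRingEnd ℂ) ω₁ * ω₂).im| = 1)
    (hζarea : |((starRingEnd ℂ) ζ₁ * ζ₂).im| = 1)
    (g : ℂ → ℂ) (hsurj : Function.Surjective g)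
    (heq : ∀ (z : ℂ) (m n : ℤ), g (z + m * ω₁ + n * ω₂) = g z + m * ζ₁ + n * ζ₂)
    (hLip : ∀ x y : ℂ, ‖g x - g y‖ ≤ ‖x - y‖) :
    ∀ x y : ℂ, ‖g x - g y‖ = ‖x - y‖ := by
  have area : ∀ u v : ℂ, |((starRingEnd ℂ) u * v).im| = 1 →
      (u.re * v.im - u.im * v.re) ^ 2 = 1 := by
    intro u v h
    rw [← sq_abs] 
    have : ((starRingEnd ℂ) u * v).im = u.re * v.im - u.im * v.re := by
      simp; ring
    rw [← this, h]; norm_num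
  have A := area _ _ hωarea
  have B := area _ _ hζarea
  obtain ⟨ea, eb, ec⟩ := forms_eq (ω₁.re ^ 2 + ω₁.im ^ 2) (ω₁.re * ω₂.re + ω₁.im * ω₂.im)
    (ω₂.re ^ 2 + ω₂.im ^ 2) (ζ₁.re ^ 2 + ζ₁.im ^ 2) (ζ₁.re * ζ₂.re + ζ₁.im * ζ₂.im)
    (ζ₂.re ^ 2 + ζ₂.im ^ 2) (by positivity) (by linear_combination A) (by linear_combination B)
    (by
      intro m n
      rw [← normsq_comb, ← normsq_comb]
      have h := hLip (0 + m * ω₁ + n * ω₂) 0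
      rw [heq] at h
      have h' : ‖(m : ℂ) * ζ₁ + n * ζ₂‖ ≤ ‖(m : ℂ) * ω₁ + n * ω₂‖ := by
        convert h using 2 <;> ring
      push_cast
      gcongr)
  have iso : ∀ x y : ℝ, ‖(x : ℂ) * ω₁ + y * ω₂‖ = ‖(x : ℂ) * ζ₁ + y * ζ₂‖ := by
    intro x y
    refine (sq_eq_sq₀ (norm_nonneg _) (norm_nonneg _)).1 ?_
    rw [normsq_comb, normsq_comb, ea, eb, ec]
  have n1 : ‖ω₁‖ = ‖ζ₁‖ := by simpa using iso 1 0
  have n2 : ‖ω₂‖ = ‖ζ₂‖ := by simpa using iso 0 1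
  have r1 := line_rigid g ω₁ ζ₁ n1 (fun z m => by simpa using heq z m 0) hLip
  have r2 := line_rigid g ω₂ ζ₂ n2 (fun z m => by simpa using heq z 0 m) hLip
  intro x y
  obtain ⟨s, t, hst⟩ : ∃ s t : ℝ, x - y = s * ω₁ + t * ω₂ := by
    set D := ω₁.re * ω₂.im - ω₁.im * ω₂.re with hD
    refine ⟨D * ((x - y).re * ω₂.im - (x - y).im * ω₂.re),
      D * (ω₁.re * (x - y).im - ω₁.im * (x - y).re), ?_⟩
    apply Complex.ext
    · simp only [Complex.add_re, Complex.re_ofReal_mul]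
      linear_combination (-(x - y).re) * A
    · simp only [Complex.add_im, Complex.im_ofReal_mul]
      linear_combination (-(x - y).im) * A
  have hx : x = y + s * ω₁ + t * ω₂ := by linear_combination hst
  have hg : g x - g y = s * ζ₁ + t * ζ₂ := by
    rw [hx, r2, r1]; ring
  rw [hg, hst, iso]
end

section
/- Let M : ℂ → ℂ be an ℝ-linear map with determinant 1 (as an ℝ-linear endomorphism of the 2-dimensional real vector space ℂ) and with operator norm ‖M‖ ≤ 1 with respect to the complex absolute value. Then M is a linear isometry: |M(z)| = |z| for all z ∈ ℂ. -/
/-- An ℝ-linear map `ℂ → ℂ` with determinant 1 and operator norm at most 1 is a linear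
isometry. -/
theorem stmt_8 (M : ℂ →L[ℝ] ℂ)
    (hdet : LinearMap.det (M : ℂ →ₗ[ℝ] ℂ) = 1) (hnorm : ‖M‖ ≤ 1) :
    ∀ z : ℂ, ‖M z‖ = ‖z‖ := by
  intro z
  rw [← LinearMap.det_toMatrix Complex.basisOneI, Matrix.det_fin_two] at hdet
  simp only [LinearMap.toMatrix_apply, Complex.coe_basisOneI, Complex.coe_basisOneI_repr,
    ContinuousLinearMap.coe_coe, Matrix.cons_val_zero, Matrix.cons_val_one] at hdet
  have key : ∀ w : ℂ, ‖w‖ = 1 → (M w).re * (M w).re + (M w).im * (M w).im ≤ 1 := by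
    intro w hw
    have h := M.le_of_opNorm_le hnorm w
    rw [hw] at h
    rw [← Complex.normSq_apply, Complex.normSq_eq_norm_sq]
    nlinarith [norm_nonneg (M w)]
  have h1 := key 1 (by simp)
  have h2 := key Complex.I (by simp)
  have hz : M z = z.re • M 1 + z.im • M Complex.I := by
    rw [← map_smul, ← map_smul, ← map_add]
    congr 1
    apply Complex.ext <;> simp
  have hre : (M z).re = z.re * (M 1).re + z.im * (M Complex.I).re := by rw [hz]; simp
  have him : (M z).im = z.re * (M 1).im + z.im * (M Complex.I).im := by rw [hz]; simp
  generalize (M 1).re = a at *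
  generalize (M 1).im = b at *
  generalize (M Complex.I).re = c at *
  generalize (M Complex.I).im = d at *
  have e1 : a - d = 0 := by
    apply pow_eq_zero_iff (two_ne_zero) |>.1
    nlinarith [sq_nonneg (a - d), sq_nonneg (b + c)]
  have e2 : b + c = 0 := by
    apply pow_eq_zero_iff (two_ne_zero) |>.1
    nlinarith [sq_nonneg (a - d), sq_nonneg (b + c)]
  obtain rfl : a = d := by linarith
  obtain rfl : c = -b := by linarith
  have e3 : a * a + b * b = 1 := by linarith
  rw [← sq_eq_sq₀ (norm_nonneg _) (norm_nonneg _), ← Complex.normSq_eq_norm_sq,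
    ← Complex.normSq_eq_norm_sq, Complex.normSq_apply, Complex.normSq_apply, hre, him]
  linear_combination (z.re * z.re + z.im * z.im) * e3
end

section
/- Let w : ℂ → ℂ be an ℝ-linear map and let ω₁, ω₂ ∈ ℂ be linearly independent over ℝ. Then the operator norm of w equals the supremum of the stretch factors over nonzero lattice vectors: ‖w‖ = sup { |w(m·ω₁ + n·ω₂)| / |m·ω₁ + n·ω₂| : m, n ∈ ℤ, (m, n) ≠ (0, 0) }. -/
/-- The operator norm of an ℝ-linear map `ℂ → ℂ` equals the supremum of stretch factors
over nonzero vectors of the lattice `ℤω₁ + ℤω₂` (Thurston's κ equals λ for flat tori). -/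
theorem stmt_9 (w : ℂ →L[ℝ] ℂ) (ω₁ ω₂ : ℂ) (hindep : LinearIndependent ℝ ![ω₁, ω₂]) :
    ‖w‖ = sSup {t : ℝ | ∃ m n : ℤ, (m, n) ≠ (0, 0) ∧
      t = ‖w (m * ω₁ + n * ω₂)‖ / ‖m * ω₁ + n * ω₂‖} := by
  set T := {t : ℝ | ∃ m n : ℤ, (m, n) ≠ (0, 0) ∧
      t = ‖w (m * ω₁ + n * ω₂)‖ / ‖m * ω₁ + n * ω₂‖} with hT
  have hub : ∀ t ∈ T, t ≤ ‖w‖ := by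
    rintro t ⟨m, n, -, rfl⟩
    exact div_le_of_le_mul₀ (norm_nonneg _) (norm_nonneg _) (w.le_opNorm _)
  have hbdd : BddAbove T := ⟨‖w‖, hub⟩
  have hne : T.Nonempty := ⟨_, 1, 0, by simp, rfl⟩
  have hlat : ∀ m n : ℤ, ‖w (m * ω₁ + n * ω₂)‖ ≤ sSup T * ‖m * ω₁ + n * ω₂‖ := by
    intro m n
    by_cases hv : (m * ω₁ + n * ω₂ : ℂ) = 0
    · simp [hv]
    · rw [← div_le_iff₀ (norm_pos_iff.2 hv)]
      refine le_csSup hbdd ⟨m, n, ?_, rfl⟩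
      intro h
      simp only [Prod.mk.injEq] at h
      apply hv
      simp [h.1, h.2]
  have hrat : ∀ p : ℚ × ℚ, ‖w ((p.1 : ℝ) • ω₁ + (p.2 : ℝ) • ω₂)‖
      ≤ sSup T * ‖(p.1 : ℝ) • ω₁ + (p.2 : ℝ) • ω₂‖ := by
    rintro ⟨p, q⟩
    have hN : (0 : ℝ) < (p.den : ℝ) * q.den := by
      have := p.den_pos
      have := q.den_pos
      positivity
    have key : (((p.num * q.den : ℤ) : ℂ) * ω₁ + ((q.num * p.den : ℤ) : ℂ) * ω₂)
        = ((p.den : ℝ) * q.den) • ((p : ℝ) • ω₁ + (q : ℝ) • ω₂) := by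
      have h1 : (p : ℂ) * p.den = p.num := by exact_mod_cast Rat.mul_den_eq_num p
      have h2 : (q : ℂ) * q.den = q.num := by exact_mod_cast Rat.mul_den_eq_num q
      simp only [Complex.real_smul]
      push_cast
      rw [← h1, ← h2]
      ring
    have := hlat (p.num * q.den) (q.num * p.den)
    rw [key, map_smul, norm_smul, norm_smul, Real.norm_of_nonneg hN.le] at this
    refine le_of_mul_le_mul_left ?_ hN
    linarith
  have hreal : ∀ x : ℝ × ℝ, ‖w (x.1 • ω₁ + x.2 • ω₂)‖ ≤ sSup T * ‖x.1 • ω₁ + x.2 • ω₂‖ := by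
    have hd : DenseRange (Prod.map ((↑) : ℚ → ℝ) ((↑) : ℚ → ℝ)) :=
      Rat.denseRange_cast.prodMap Rat.denseRange_cast
    intro x
    refine isClosed_property (p := fun x : ℝ × ℝ => ‖w (x.1 • ω₁ + x.2 • ω₂)‖ ≤
      sSup T * ‖x.1 • ω₁ + x.2 • ω₂‖) hd ?_ hrat x
    exact isClosed_le (by fun_prop) (by fun_prop)
  apply le_antisymm
  · refine w.opNorm_le_bound ?_ ?_
    · obtain ⟨t, ht⟩ := hne
      refine le_trans ?_ (le_csSup hbdd ht)
      obtain ⟨m, n, -, rfl⟩ := ht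
      positivity
    · intro z
      have hs := hindep.span_eq_top_of_card_eq_finrank (by simp [Complex.finrank_real_complex])
      have hz : z ∈ Submodule.span ℝ (Set.range ![ω₁, ω₂]) := by rw [hs]; trivial
      rw [Matrix.range_cons, Matrix.range_cons, Matrix.range_empty, Set.union_empty,
        Set.singleton_union, Submodule.mem_span_pair] at hz
      obtain ⟨a, b, rfl⟩ := hz
      exact hreal (a, b)
  · exact csSup_le hne hub
end

section
/- Let τ and τ' be points of the upper half-plane ℍ ⊂ ℂ. Let w₁ : ℂ → ℂ be the unique ℝ-linear map with w₁(1) = 1 and w₁(τ) = τ', and let w₂ : ℂ → ℂ be the unique ℝ-linear map with w₂(1) = 1 and w₂(τ') = τ. Then max(log ‖w₁‖, log ‖w₂‖) ≤ dist(τ, τ') ≤ 2 · max(log ‖w₁‖, log ‖w₂‖), where ‖·‖ denotes the operator norm with respect to the complex absolute value and dist is the hyperbolic (Poincaré) distance on ℍ. (This is Sorvali's inequality comparing his dilatation metric d = max(log ‖w₁‖, log ‖w₂‖) with the Teichmüller metric on the Teichmüller space of the torus.) -/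
open Complex in
lemma norm_aux (w : ℂ →L[ℝ] ℂ) (α β : ℂ)
    (h : ∀ z, w z = α * z + β * (starRingEnd ℂ) z) : ‖w‖ = ‖α‖ + ‖β‖ := by
  apply le_antisymm
  · refine w.opNorm_le_bound (by positivity) fun z => ?_
    rw [h, add_mul]
    refine (norm_add_le _ _).trans ?_
    simp
  · set u : ℂ := exp (((arg β - arg α) / 2 : ℝ) * I) with hu
    have hn : ‖u‖ = 1 := norm_exp_ofReal_mul_I _
    have h1 : α * u = ‖α‖ * exp (((arg β + arg α) / 2 : ℝ) * I) := by
      conv_lhs => rw [← norm_mul_exp_arg_mul_I α]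
      rw [mul_assoc, hu, ← Complex.exp_add]
      congr 2
      push_cast
      ring
    have h2 : β * (starRingEnd ℂ) u = ‖β‖ * exp (((arg β + arg α) / 2 : ℝ) * I) := by
      conv_lhs => rw [← norm_mul_exp_arg_mul_I β]
      rw [mul_assoc, hu, ← Complex.exp_conj, ← Complex.exp_add]
      congr 2
      rw [map_mul, conj_ofReal, conj_I]
      push_cast
      ring
    have h3 := w.le_opNorm u
    rw [h, h1, h2, ← add_mul, norm_mul, norm_exp_ofReal_mul_I, hn, ← ofReal_add,
      norm_real, Real.norm_of_nonneg (by positivity)] at h3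
    simpa using h3

lemma log_norm_aux (τ τ' : UpperHalfPlane) (w : ℂ →L[ℝ] ℂ)
    (h1 : w 1 = 1) (h2 : w (τ : ℂ) = (τ' : ℂ)) :
    Real.log ‖w‖ = dist τ τ' / 2 + (Real.log τ'.im - Real.log τ.im) / 2 := by
  have hy := τ.im_pos
  have hy' := τ'.im_pos
  set c : ℂ := 2 * (τ.im : ℂ) * Complex.I with hc
  have hyc : (τ.im : ℂ) ≠ 0 := by exact_mod_cast hy.ne'
  have hc0 : c ≠ 0 := by simp [hc, hyc]
  have hcc : (τ : ℂ) - (starRingEnd ℂ) (τ : ℂ) = c := by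
    apply Complex.ext <;> simp [hc]
    ring
  have hcn : ‖c‖ = 2 * τ.im := by simp [hc, abs_of_pos hy]
  have hw : ∀ z, w z = ((τ' - (starRingEnd ℂ) (τ : ℂ)) / c) * z
      + ((τ - τ' : ℂ) / c) * (starRingEnd ℂ) z := by
    intro z
    have hz : z = (z.re - z.im / τ.im * τ.re : ℝ) • (1 : ℂ) + (z.im / τ.im : ℝ) • (τ : ℂ) := by
      apply Complex.ext <;> simp
      field_simp
    have key : ∀ a b : ℝ, w (a • (1 : ℂ) + b • (τ : ℂ)) =
      ((τ' - (starRingEnd ℂ) (τ : ℂ)) / c) * (a • (1 : ℂ) + b • (τ : ℂ))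
      + ((τ - τ' : ℂ) / c) * (starRingEnd ℂ) (a • (1 : ℂ) + b • (τ : ℂ)) := by
      intro a b
      rw [map_add, map_smul, map_smul, h1, h2]
      simp only [Complex.real_smul, map_add, map_mul, Complex.conj_ofReal, map_one]
      field_simp
      rw [← hcc]
      ring
    rw [hz]
    exact key _ _
  have hn := norm_aux w _ _ hw
  have he := UpperHalfPlane.exp_half_dist τ' τ
  have hs : 0 < √(τ'.im * τ.im) := by positivity
  have hn2 : ‖w‖ = Real.exp (dist τ' τ / 2) * (√(τ'.im * τ.im) / τ.im) := by
    rw [hn, he, norm_div, norm_div, hcn, dist_comm (τ' : ℂ) (τ : ℂ), Complex.dist_eq,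
      Complex.dist_eq]
    field_simp
    ring
  rw [hn2, Real.log_mul (by positivity) (by positivity), Real.log_exp,
    Real.log_div hs.ne' hy.ne', Real.log_sqrt (by positivity),
    Real.log_mul hy'.ne' hy.ne', dist_comm]
  ring


/-- Sorvali's sharp inequality comparing his dilatation metric
`d = max(log ‖w₁‖, log ‖w₂‖)` with the Teichmüller (hyperbolic) metric:
`d ≤ dist τ τ' ≤ 2 d`. -/
theorem stmt_16 (τ τ' : UpperHalfPlane) (w₁ w₂ : ℂ →L[ℝ] ℂ)
    (h11 : w₁ 1 = 1) (h12 : w₁ (τ : ℂ) = (τ' : ℂ))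
    (h21 : w₂ 1 = 1) (h22 : w₂ (τ' : ℂ) = (τ : ℂ)) :
    max (Real.log ‖w₁‖) (Real.log ‖w₂‖) ≤ dist τ τ' ∧
      dist τ τ' ≤ 2 * max (Real.log ‖w₁‖) (Real.log ‖w₂‖) := by
  have h1 := log_norm_aux τ τ' w₁ h11 h12
  have h2 := log_norm_aux τ' τ w₂ h21 h22
  have h3 := UpperHalfPlane.dist_log_im_le τ τ'
  rw [Real.dist_eq, abs_le] at h3
  rw [dist_comm τ' τ] at h2
  constructor
  · apply max_le <;> linarith
  · have := le_max_left (Real.log ‖w₁‖) (Real.log ‖w₂‖)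
    have := le_max_right (Real.log ‖w₁‖) (Real.log ‖w₂‖)
    linarith
end

section
/- Let τ and τ' be points of the upper half-plane ℍ ⊂ ℂ, and let w : ℂ → ℂ be the unique ℝ-linear map with w(1/√(Im τ)) = 1/√(Im τ') and w(τ/√(Im τ)) = τ'/√(Im τ'). Then ‖w‖ = 1 if and only if τ = τ', where ‖w‖ is the operator norm with respect to the complex absolute value. (Hence Thurston's Lipschitz metric λ(τ, τ') = log ‖w‖ is nonnegative and separates points on the Teichmüller space of unit-area flat tori.) -/
/-- The normalized affine map from `τ` to `τ'` has operator norm 1 exactly when `τ = τ'`;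
hence Thurston's Lipschitz metric `λ(τ,τ') = log ‖w‖` separates points. -/
theorem stmt_18 (τ τ' : UpperHalfPlane) (w : ℂ →L[ℝ] ℂ)
    (h1 : w (1 / (Real.sqrt τ.im : ℂ)) = 1 / (Real.sqrt τ'.im : ℂ))
    (h2 : w ((τ : ℂ) / (Real.sqrt τ.im : ℂ)) = (τ' : ℂ) / (Real.sqrt τ'.im : ℂ)) :
    ‖w‖ = 1 ↔ τ = τ' := by
  have hs : 0 < Real.sqrt τ.im := Real.sqrt_pos.2 τ.im_pos
  have hs' : 0 < Real.sqrt τ'.im := Real.sqrt_pos.2 τ'.im_pos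
  have hss : Real.sqrt τ.im ^ 2 = τ.im := Real.sq_sqrt τ.im_pos.le
  have hss' : Real.sqrt τ'.im ^ 2 = τ'.im := Real.sq_sqrt τ'.im_pos.le
  generalize Real.sqrt τ.im = s at *
  generalize Real.sqrt τ'.im = s' at *
  have hlin : ∀ x y : ℝ, w ⟨x, y⟩ = x * w 1 + y * w Complex.I := by
    intro x y
    have : (⟨x, y⟩ : ℂ) = x • (1 : ℂ) + y • Complex.I := by
      apply Complex.ext <;> simp
    rw [this, map_add, map_smul, map_smul]; simp
  have e1 : (1 / (s : ℂ)) = ⟨1 / s, 0⟩ := by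
    rw [show (1 / (s : ℂ)) = ((1 / s : ℝ) : ℂ) by push_cast; rfl]; rfl
  have e2 : ((τ : ℂ) / (s : ℂ)) = ⟨τ.re / s, τ.im / s⟩ := by
    apply Complex.ext <;> simp
  rw [e1, hlin] at h1
  rw [e2, hlin] at h2
  have a1 := congrArg Complex.re h1
  have a2 := congrArg Complex.im h1
  have b1 := congrArg Complex.re h2
  have b2 := congrArg Complex.im h2
  rw [show (1 / (s' : ℂ)) = ((1 / s' : ℝ) : ℂ) by push_cast; rfl] at a1 a2
  simp only [Complex.add_re, Complex.add_im, Complex.re_ofReal_mul, Complex.im_ofReal_mul,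
    Complex.ofReal_re, Complex.ofReal_im, Complex.div_ofReal_re, Complex.div_ofReal_im,
    UpperHalfPlane.coe_re, UpperHalfPlane.coe_im] at a1 a2 b1 b2
  have c2 : (w 1).im = 0 := by
    have : (1 / s) ≠ 0 := by positivity
    simpa [hs.ne'] using a2
  have c1 : (w 1).re * s' = s := by
    field_simp at a1; linarith
  rw [c2] at b2
  rw [← hss, ← hss'] at b2
  rw [← hss] at b1
  have d2 : s * (w Complex.I).im = s' := by
    field_simp at b2
    apply mul_left_cancel₀ hs.ne'; linarith
  have d1 : τ.re * (w 1).re * s' + s ^ 2 * (w Complex.I).re * s' = τ'.re * s := by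
    field_simp at b1; linarith
  constructor
  · intro h
    have n1 : (w 1).re ≤ 1 := by
      have := w.le_opNorm 1
      have h3 := Complex.re_le_norm (w 1)
      simp [h] at this; linarith
    have n2 : ‖w Complex.I‖ ≤ 1 := by
      have := w.le_opNorm Complex.I
      simpa [h] using this
    have n3 : (w Complex.I).re ^ 2 + (w Complex.I).im ^ 2 ≤ 1 := by
      have := Complex.sq_norm (w Complex.I)
      rw [Complex.normSq_apply] at this
      nlinarith [norm_nonneg (w Complex.I)]
    have n4 : (w Complex.I).im ≤ 1 := by nlinarith [sq_nonneg (w Complex.I).re]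
    have l1 : s ≤ s' := by nlinarith
    have l2 : s' ≤ s := by nlinarith
    have l : s = s' := le_antisymm l1 l2
    subst l
    have i1 : (w Complex.I).im = 1 := by
      apply mul_left_cancel₀ hs.ne'; linarith
    have i2 : (w Complex.I).re = 0 := by
      rw [i1] at n3; nlinarith
    have i3 : (w 1).re = 1 := by
      apply mul_right_cancel₀ hs.ne'; linarith
    rw [i2, i3] at d1
    apply UpperHalfPlane.ext
    apply Complex.ext
    · apply mul_right_cancel₀ hs.ne'
      simp only [UpperHalfPlane.coe_re]; linarith
    · simp only [UpperHalfPlane.coe_im]; linarith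
  · rintro rfl
    have l : s = s' := by nlinarith
    subst l
    have i1 : (w Complex.I).im = 1 := by
      apply mul_left_cancel₀ hs.ne'; linarith
    have i3 : (w 1).re = 1 := by
      apply mul_right_cancel₀ hs.ne'; linarith
    have i2 : (w Complex.I).re = 0 := by
      rw [i3] at d1
      have : s ^ 3 * (w Complex.I).re = s ^ 3 * 0 := by linarith
      exact mul_left_cancel₀ (by positivity) this
    have : w = ContinuousLinearMap.id ℝ ℂ := by
      ext z
      have := hlin z.re z.im
      rw [show w 1 = 1 from Complex.ext i3 c2, show w Complex.I = Complex.I from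
        Complex.ext (by simpa using i2) (by simpa using i1)] at this
      simpa using this
    rw [this]
    exact ContinuousLinearMap.norm_id
end
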